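/- arXiv:2302.14755 — 5 statements merged into one kernel-verified Lean document; each statement's English description precedes it below -/
import Mathlib

section
/- Let k be an odd natural number and let P : Fin k → Matrix (Fin 2) (Fin 2) ℂ be such that each P i is either the Pauli matrix X or the Pauli matrix Z. Let S be the k-fold Kronecker product of the P i (the matrix indexed by (Fin k → Fin 2) with entry S x y = ∏ i, (P i) (x i) (y i)), and let S' be the k-fold Kronecker product of the matrices H * (P i) * H (which is H^{⊗k} S H^{⊗k}). Then S and S' anticommute: S * S' = -(S' * S). (This is the key anticommutation step in Case II of the proof of Lemma 3.3: a k-qubit Pauli consisting only of X's and Z's, with an odd total number of factors, anticommutes with its conjugation by H^{⊗k}.) -/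
/-!
Conjugation by the Hadamard matrix exchanges `X` and `Z`, which anticommute. Kronecker products
multiply factor by factor, so moving the product of the `P i` past the product of the `H * P i * H`
costs one sign per tensor factor, an odd number in total.
-/

open Matrix

noncomputable def PauliX : Matrix (Fin 2) (Fin 2) ℂ := !![0, 1; 1, 0]

noncomputable def PauliZ : Matrix (Fin 2) (Fin 2) ℂ := !![1, 0; 0, -1]

noncomputable def Hadamard : Matrix (Fin 2) (Fin 2) ℂ :=
  (1 / (Real.sqrt 2 : ℂ)) • !![1, 1; 1, -1]

/-- The `k`-fold Kronecker product of single-qubit matrices. -/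
noncomputable def kronPow {k : ℕ} (P : Fin k → Matrix (Fin 2) (Fin 2) ℂ) :
    Matrix (Fin k → Fin 2) (Fin k → Fin 2) ℂ :=
  Matrix.of fun x y => ∏ i, P i (x i) (y i)

section PiKronecker

variable {ι R : Type*} [Fintype ι]

/-- The Kronecker product of a finite family of rectangular matrices. Rows and columns are indexed
by dependent functions, so no order on the factors is chosen; `kronPow` is the case of `2 × 2`
complex matrices indexed by `Fin k`. -/
def piKronecker {m n : ι → Type*} [CommMonoid R] (A : ∀ i, Matrix (m i) (n i) R) :
    Matrix (∀ i, m i) (∀ i, n i) R :=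
  Matrix.of fun x y => ∏ i, A i (x i) (y i)

theorem piKronecker_smul {m n : ι → Type*} [CommMonoid R] (c : ι → R)
    (A : ∀ i, Matrix (m i) (n i) R) :
    piKronecker (fun i => c i • A i) = (∏ i, c i) • piKronecker A := by
  ext x y
  exact Finset.prod_mul_distrib

variable [DecidableEq ι] [CommSemiring R]

theorem piKronecker_mul_piKronecker {l m n : ι → Type*} [∀ i, Fintype (m i)]
    (A : ∀ i, Matrix (l i) (m i) R) (B : ∀ i, Matrix (m i) (n i) R) :
    piKronecker A * piKronecker B = piKronecker fun i => A i * B i := by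
  ext x y
  simp only [piKronecker, Matrix.mul_apply, Matrix.of_apply, ← Finset.prod_mul_distrib,
    Fintype.prod_sum]

theorem piKronecker_mul_eq_prod_smul_mul {n : ι → Type*} [∀ i, Fintype (n i)]
    {A B : ∀ i, Matrix (n i) (n i) R} {c : ι → R}
    (h : ∀ i, A i * B i = c i • (B i * A i)) :
    piKronecker A * piKronecker B = (∏ i, c i) • (piKronecker B * piKronecker A) := by
  simp only [piKronecker_mul_piKronecker, h, piKronecker_smul]

end PiKronecker

theorem kronPow_eq_piKronecker {k : ℕ} (P : Fin k → Matrix (Fin 2) (Fin 2) ℂ) :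
    kronPow P = piKronecker P :=
  rfl

theorem pauliX_mul_pauliZ : PauliX * PauliZ = -(PauliZ * PauliX) := by
  simp [PauliX, PauliZ]

theorem hadamard_mul_self : Hadamard * Hadamard = 1 := by
  have scalar_sq : 1 / (Real.sqrt 2 : ℂ) * (1 / (Real.sqrt 2 : ℂ)) = 1 / 2 := by
    rw [div_mul_div_comm, one_mul, ← Complex.ofReal_mul, Real.mul_self_sqrt zero_le_two,
      Complex.ofReal_ofNat]
  have sign_matrix_sq :
      (!![1, 1; 1, -1] * !![1, 1; 1, -1] : Matrix (Fin 2) (Fin 2) ℂ) = (2 : ℂ) • 1 := by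
    rw [Matrix.one_fin_two]
    norm_num
  rw [Hadamard, smul_mul_smul_comm, scalar_sq, sign_matrix_sq, smul_smul,
    one_div_mul_cancel two_ne_zero, one_smul]

theorem hadamard_mul_pauliX : Hadamard * PauliX = PauliZ * Hadamard := by
  simp [Hadamard, PauliX, PauliZ]

theorem hadamard_conj_pauliX : Hadamard * PauliX * Hadamard = PauliZ := by
  rw [hadamard_mul_pauliX, mul_assoc, hadamard_mul_self, mul_one]

theorem hadamard_conj_pauliZ : Hadamard * PauliZ * Hadamard = PauliX := by
  rw [mul_assoc, ← hadamard_mul_pauliX, ← mul_assoc, hadamard_mul_self, one_mul]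

theorem mul_hadamard_conj_eq_neg {A : Matrix (Fin 2) (Fin 2) ℂ} (hA : A = PauliX ∨ A = PauliZ) :
    A * (Hadamard * A * Hadamard) = -(Hadamard * A * Hadamard * A) := by
  rcases hA with rfl | rfl
  · rw [hadamard_conj_pauliX, pauliX_mul_pauliZ]
  · rw [hadamard_conj_pauliZ, pauliX_mul_pauliZ, neg_neg]

theorem odd_XZ_pauli_anticommutes_with_H_conjugate_general {ι : Type*} [Fintype ι] [DecidableEq ι]
    (P : ι → Matrix (Fin 2) (Fin 2) ℂ) (hP : ∀ i, P i = PauliX ∨ P i = PauliZ) :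
    piKronecker P * piKronecker (fun i => Hadamard * P i * Hadamard) =
      (-1 : ℂ) ^ Fintype.card ι •
        (piKronecker (fun i => Hadamard * P i * Hadamard) * piKronecker P) := by
  have anticomm (i : ι) : P i * (Hadamard * P i * Hadamard) =
      (-1 : ℂ) • (Hadamard * P i * Hadamard * P i) := by
    rw [neg_one_smul, mul_hadamard_conj_eq_neg (hP i)]
  rw [piKronecker_mul_eq_prod_smul_mul anticomm, Finset.prod_const, Finset.card_univ]

theorem odd_XZ_pauli_anticommutes_with_H_conjugate
    (k : ℕ) (hk : Odd k) (P : Fin k → Matrix (Fin 2) (Fin 2) ℂ)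
    (hP : ∀ i, P i = PauliX ∨ P i = PauliZ) :
    kronPow P * kronPow (fun i => Hadamard * P i * Hadamard) =
      -(kronPow (fun i => Hadamard * P i * Hadamard) * kronPow P) := by
  simpa only [kronPow_eq_piKronecker, Fintype.card_fin, hk.neg_one_pow, neg_one_smul]
    using odd_XZ_pauli_anticommutes_with_H_conjugate_general P hP
end

section
/- Let D = !![cos(π/8), -sin(π/8); sin(π/8), cos(π/8)] as a 2×2 complex matrix. For every vector η in the list of six single-qubit stabilizer states — ![1,0], ![0,1], (1/√2)•![1,1], (1/√2)•![1,-1], (1/√2)•![1, i], (1/√2)•![1, -i] — the squared modulus of the second component of D.mulVec η satisfies ‖(D.mulVec η) 1‖² ≥ sin²(π/8). (Lemma B.2 of the paper: every single-qubit stabilizer state has energy at least sin²(π/8) under the rotated projector Dᴴ|1⟩⟨1|D.) -/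
open Matrix

noncomputable def Drot : Matrix (Fin 2) (Fin 2) ℂ :=
  !![(Real.cos (Real.pi / 8) : ℂ), -(Real.sin (Real.pi / 8) : ℂ);
     (Real.sin (Real.pi / 8) : ℂ), (Real.cos (Real.pi / 8) : ℂ)]

/-!
With `x` and `z` the Bloch coordinates of a unit vector, its energy is
`(1 - (z - x) / √2) / 2`, and `sin² (π / 8) = (1 - 1 / √2) / 2`. Hence the bound holds exactly on
the half-space `z - x ≤ 1` of the Bloch sphere. The state `|0⟩` has `z - x = 1`, the state `|1⟩` has
`z - x = -1`, and the other four stabilizer states lie on the equator `z = 0`, where `-x ≤ 1`.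
-/

/-- The Bloch coordinate `⟨η| X |η⟩` of a (not necessarily normalized) qubit state vector `η`,
where `X` is the Pauli matrix; the two complex conjugate summands of `⟨η| X |η⟩` are combined
into twice a real part. -/
noncomputable def blochX (η : Fin 2 → ℂ) : ℝ :=
  2 * (star (η 0) * η 1).re

/-- The Bloch coordinate `⟨η| Z |η⟩` of a (not necessarily normalized) qubit state vector `η`,
where `Z` is the Pauli matrix. -/
noncomputable def blochZ (η : Fin 2 → ℂ) : ℝ :=
  ‖η 0‖ ^ 2 - ‖η 1‖ ^ 2

/-- The six single-qubit stabilizer states `|0⟩, |1⟩, |+⟩, |-⟩, |y+⟩, |y-⟩`, each given by one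
representative of its class modulo global phase. -/
noncomputable def singleQubitStabilizerStates : List (Fin 2 → ℂ) :=
  [![1, 0], ![0, 1],
    (1 / (Real.sqrt 2 : ℂ)) • ![1, 1], (1 / (Real.sqrt 2 : ℂ)) • ![1, -1],
    (1 / (Real.sqrt 2 : ℂ)) • ![1, Complex.I], (1 / (Real.sqrt 2 : ℂ)) • ![1, -Complex.I]]

lemma norm_sin_mul_add_cos_mul_sq (θ : ℝ) (η : Fin 2 → ℂ) :
    ‖(Real.sin θ : ℂ) * η 0 + (Real.cos θ : ℂ) * η 1‖ ^ 2 =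
      (‖η 0‖ ^ 2 + ‖η 1‖ ^ 2
        - (Real.cos (2 * θ) * blochZ η - Real.sin (2 * θ) * blochX η)) / 2 := by
  have expand : ‖(Real.sin θ : ℂ) * η 0 + (Real.cos θ : ℂ) * η 1‖ ^ 2 =
      Real.sin θ ^ 2 * ‖η 0‖ ^ 2 + Real.cos θ ^ 2 * ‖η 1‖ ^ 2
        + Real.sin θ * Real.cos θ * blochX η := by
    simp only [blochX, Complex.sq_norm, Complex.normSq_apply, Complex.add_re, Complex.add_im,
      Complex.mul_re, Complex.mul_im, Complex.ofReal_re, Complex.ofReal_im, Complex.star_def,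
      Complex.conj_re, Complex.conj_im]
    ring
  rw [expand, blochZ, Real.sin_two_mul, Real.cos_two_mul, Real.sin_sq]
  ring

lemma norm_Drot_mulVec_one_sq (η : Fin 2 → ℂ) :
    ‖(Drot.mulVec η) 1‖ ^ 2 =
      (‖η 0‖ ^ 2 + ‖η 1‖ ^ 2 - √2 / 2 * (blochZ η - blochX η)) / 2 := by
  have second_row : (Drot.mulVec η) 1 =
      (Real.sin (Real.pi / 8) : ℂ) * η 0 + (Real.cos (Real.pi / 8) : ℂ) * η 1 := by
    simp [Drot, mulVec, dotProduct, Fin.sum_univ_two]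
  have double_angle : 2 * (Real.pi / 8) = Real.pi / 4 := by ring
  rw [second_row, norm_sin_mul_add_cos_mul_sq, double_angle, Real.cos_pi_div_four,
    Real.sin_pi_div_four, mul_sub]

lemma sin_pi_div_eight_sq : Real.sin (Real.pi / 8) ^ 2 = (1 - √2 / 2) / 2 := by
  have double_angle : 2 * (Real.pi / 8) = Real.pi / 4 := by ring
  rw [Real.sin_sq_eq_half_sub, double_angle, Real.cos_pi_div_four]
  ring

theorem single_qubit_stabilizer_energy_lower_bound_general {η : Fin 2 → ℂ}
    (unit : ‖η 0‖ ^ 2 + ‖η 1‖ ^ 2 = 1) (halfSpace : blochZ η - blochX η ≤ 1) :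
    Real.sin (Real.pi / 8) ^ 2 ≤ ‖(Drot.mulVec η) 1‖ ^ 2 := by
  rw [sin_pi_div_eight_sq, norm_Drot_mulVec_one_sq, unit]
  gcongr
  exact mul_le_of_le_one_right (by positivity) halfSpace

lemma norm_one_div_sqrt_two_mul_sq (w : ℂ) : ‖1 / (√2 : ℂ) * w‖ ^ 2 = ‖w‖ ^ 2 / 2 := by
  rw [norm_mul, norm_div, norm_one, Complex.norm_of_nonneg (Real.sqrt_nonneg 2), mul_pow, div_pow,
    Real.sq_sqrt zero_le_two]
  ring

lemma norm_sq_add_norm_sq_one_div_sqrt_two_smul (w : ℂ) :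
    ‖((1 / (√2 : ℂ)) • ![1, w]) 0‖ ^ 2 + ‖((1 / (√2 : ℂ)) • ![1, w]) 1‖ ^ 2 =
      (1 + ‖w‖ ^ 2) / 2 := by
  simp only [Pi.smul_apply, smul_eq_mul, norm_one_div_sqrt_two_mul_sq, cons_val_zero, cons_val_one,
    norm_one]
  ring

lemma blochZ_one_div_sqrt_two_smul (w : ℂ) :
    blochZ ((1 / (√2 : ℂ)) • ![1, w]) = (1 - ‖w‖ ^ 2) / 2 := by
  simp only [blochZ, Pi.smul_apply, smul_eq_mul, norm_one_div_sqrt_two_mul_sq, cons_val_zero,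
    cons_val_one, norm_one]
  ring

lemma blochX_one_div_sqrt_two_smul (w : ℂ) : blochX ((1 / (√2 : ℂ)) • ![1, w]) = w.re := by
  have scalar : star (1 / (√2 : ℂ) * 1) * (1 / (√2 : ℂ) * w) = ((1 / 2 : ℝ) : ℂ) * w := by
    have sqrt_two_mul_self : (√2 : ℂ) * √2 = 2 := by
      exact_mod_cast Real.mul_self_sqrt zero_le_two
    simp only [mul_one, one_div, star_inv₀, Complex.star_def, Complex.conj_ofReal]
    rw [← mul_assoc, ← mul_inv, sqrt_two_mul_self]
    norm_num
  simp only [blochX, Pi.smul_apply, smul_eq_mul, cons_val_zero, cons_val_one]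
  rw [scalar, Complex.re_ofReal_mul]
  ring

lemma eq_pole_or_equator_of_mem_singleQubitStabilizerStates {η : Fin 2 → ℂ}
    (hη : η ∈ singleQubitStabilizerStates) :
    η = ![1, 0] ∨ η = ![0, 1] ∨ ∃ w : ℂ, ‖w‖ = 1 ∧ η = (1 / (√2 : ℂ)) • ![1, w] := by
  simp only [singleQubitStabilizerStates, List.mem_cons, List.not_mem_nil, or_false] at hη
  rcases hη with zero | one | plus | minus | yPlus | yMinus
  · exact .inl zero
  · exact .inr (.inl one)
  · exact .inr (.inr ⟨1, norm_one, plus⟩)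
  · exact .inr (.inr ⟨-1, by rw [norm_neg, norm_one], minus⟩)
  · exact .inr (.inr ⟨Complex.I, Complex.norm_I, yPlus⟩)
  · exact .inr (.inr ⟨-Complex.I, by rw [norm_neg, Complex.norm_I], yMinus⟩)

lemma norm_sq_add_norm_sq_of_mem_singleQubitStabilizerStates {η : Fin 2 → ℂ}
    (hη : η ∈ singleQubitStabilizerStates) : ‖η 0‖ ^ 2 + ‖η 1‖ ^ 2 = 1 := by
  rcases eq_pole_or_equator_of_mem_singleQubitStabilizerStates hη with rfl | rfl | ⟨w, hw, rfl⟩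
  · simp
  · simp
  · rw [norm_sq_add_norm_sq_one_div_sqrt_two_smul, hw]
    norm_num

lemma blochZ_sub_blochX_le_one_of_mem_singleQubitStabilizerStates {η : Fin 2 → ℂ}
    (hη : η ∈ singleQubitStabilizerStates) : blochZ η - blochX η ≤ 1 := by
  rcases eq_pole_or_equator_of_mem_singleQubitStabilizerStates hη with rfl | rfl | ⟨w, hw, rfl⟩
  · simp [blochZ, blochX]
  · norm_num [blochZ, blochX]
  · have neg_one_le_re : -1 ≤ w.re := (abs_le.mp (hw ▸ Complex.abs_re_le_norm w)).1
    rw [blochZ_one_div_sqrt_two_smul, blochX_one_div_sqrt_two_smul, hw]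
    linarith

theorem single_qubit_stabilizer_energy_lower_bound :
    ∀ η ∈ [(![1, 0] : Fin 2 → ℂ), ![0, 1],
            (1 / (Real.sqrt 2 : ℂ)) • ![1, 1],
            (1 / (Real.sqrt 2 : ℂ)) • ![1, -1],
            (1 / (Real.sqrt 2 : ℂ)) • ![1, Complex.I],
            (1 / (Real.sqrt 2 : ℂ)) • ![1, -Complex.I]],
      Real.sin (Real.pi / 8) ^ 2 ≤ ‖(Drot.mulVec η) 1‖ ^ 2 :=
  fun _ hη ↦ single_qubit_stabilizer_energy_lower_bound_general
    (norm_sq_add_norm_sq_of_mem_singleQubitStabilizerStates hη)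
    (blochZ_sub_blochX_le_one_of_mem_singleQubitStabilizerStates hη)
end

section
/- Let Π := Dᴴ * !![0,0;0,1] * D (the rotated single-qubit projector Dᴴ|1⟩⟨1|D). For every θ ∈ ℝ and every σ in the set {X, -X, Y, -Y, Z, -Z} of signed non-identity Pauli matrices, the state ρ = (1/2 : ℂ)•1 + ((Real.sin (2θ))/4 : ℂ)•σ satisfies Re(trace (ρ * Π)) ≥ sin²(π/8). (This is Case II.1 in the proof of Lemma B.7: a single-qubit reduced state of the form ½I + ¼sin(2θ)σ has energy at least sin²(π/8) under the rotated projector.) -/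
open Matrix

noncomputable def PauliY : Matrix (Fin 2) (Fin 2) ℂ := !![0, -Complex.I; Complex.I, 0]

/-- The rotated single-qubit projector `Dᴴ |1⟩⟨1| D`. -/
noncomputable def rotProj : Matrix (Fin 2) (Fin 2) ℂ := Drotᴴ * !![0, 0; 0, 1] * Drot

/-! The rotated projector is `½ (1 + (X - Z) / √2)`, and `sin² (π / 8) = ½ (1 - 1 / √2)`. Hence
the states of energy at least `sin² (π / 8)` are cut out of the Bloch ball by the half-space
`z - x ≤ 1`. This half-space contains all six signed Pauli directions, the poles `Z` and `-X` lying
on its boundary, so by convexity it contains every `½ + a σ` with `|a| ≤ ½`. -/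

/-- The non-identity Pauli matrices up to sign, i.e. the six vertices of the stabilizer octahedron
in Bloch coordinates. -/
def IsSignedPauli (σ : Matrix (Fin 2) (Fin 2) ℂ) : Prop :=
  σ = PauliX ∨ σ = -PauliX ∨ σ = PauliY ∨ σ = -PauliY ∨ σ = PauliZ ∨ σ = -PauliZ

theorem trace_PauliZ_sub_PauliX : (PauliZ - PauliX).trace = 0 := by
  simp [PauliX, PauliZ, trace_fin_two]

theorem trace_half_add_smul {σ : Matrix (Fin 2) (Fin 2) ℂ} (hσ : σ.trace = 0) (a : ℂ) :
    ((1 / 2 : ℂ) • (1 : Matrix (Fin 2) (Fin 2) ℂ) + a • σ).trace = 1 := by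
  simp [hσ]

theorem trace_smul_one_add_smul_mul {n R : Type*} [Fintype n] [DecidableEq n] [CommSemiring R]
    {A : Matrix n n R} (hA : A.trace = 0) (c a : R) (σ : Matrix n n R) :
    ((c • (1 : Matrix n n R) + a • σ) * A).trace = a * (σ * A).trace := by
  rw [add_mul, smul_mul_assoc, smul_mul_assoc, one_mul, trace_add, trace_smul, trace_smul, hA,
    smul_zero, zero_add, smul_eq_mul]

namespace IsSignedPauli

variable {σ : Matrix (Fin 2) (Fin 2) ℂ}

theorem trace_eq_zero (hσ : IsSignedPauli σ) : σ.trace = 0 := by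
  rcases hσ with rfl | rfl | rfl | rfl | rfl | rfl <;>
    simp [PauliX, PauliY, PauliZ, trace_fin_two]

theorem abs_re_trace_mul_PauliZ_sub_PauliX_le (hσ : IsSignedPauli σ) :
    |(σ * (PauliZ - PauliX)).trace.re| ≤ 2 := by
  rcases hσ with rfl | rfl | rfl | rfl | rfl | rfl <;>
    norm_num [PauliX, PauliY, PauliZ, trace_fin_two, mul_apply, Fin.sum_univ_two]

theorem re_trace_half_add_smul_mul_le (hσ : IsSignedPauli σ) {a : ℝ} (ha : |a| ≤ 1 / 2) :
    (((1 / 2 : ℂ) • (1 : Matrix (Fin 2) (Fin 2) ℂ) + (a : ℂ) • σ) *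
      (PauliZ - PauliX)).trace.re ≤ 1 := by
  rw [trace_smul_one_add_smul_mul trace_PauliZ_sub_PauliX, Complex.re_ofReal_mul]
  calc a * (σ * (PauliZ - PauliX)).trace.re
    _ ≤ |a| * |(σ * (PauliZ - PauliX)).trace.re| := (le_abs_self _).trans_eq (abs_mul _ _)
    _ ≤ 1 / 2 * 2 := by gcongr; exact hσ.abs_re_trace_mul_PauliZ_sub_PauliX_le
    _ = 1 := by norm_num

end IsSignedPauli

theorem rotation_conjTranspose_mul_proj_mul_rotation (c s : ℝ) :
    (!![(c : ℂ), -(s : ℂ); (s : ℂ), (c : ℂ)])ᴴ * !![0, 0; 0, 1] *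
        !![(c : ℂ), -(s : ℂ); (s : ℂ), (c : ℂ)] =
      !![((s ^ 2 : ℝ) : ℂ), ((s * c : ℝ) : ℂ); ((s * c : ℝ) : ℂ), ((c ^ 2 : ℝ) : ℂ)] := by
  ext i j
  fin_cases i <;> fin_cases j <;>
    simp [mul_apply, Fin.sum_univ_two, Complex.conj_ofReal, pow_two, mul_comm]

theorem rotated_proj_eq_pauli (φ : ℝ) :
    !![((Real.sin φ ^ 2 : ℝ) : ℂ), ((Real.sin φ * Real.cos φ : ℝ) : ℂ);
        ((Real.sin φ * Real.cos φ : ℝ) : ℂ), ((Real.cos φ ^ 2 : ℝ) : ℂ)] =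
      (1 / 2 : ℂ) • (1 : Matrix (Fin 2) (Fin 2) ℂ) +
        ((Real.sin (2 * φ) / 2 : ℝ) : ℂ) • PauliX - ((Real.cos (2 * φ) / 2 : ℝ) : ℂ) • PauliZ := by
  have sin_mul_cos : Real.sin φ * Real.cos φ = Real.sin (2 * φ) / 2 := by
    rw [Real.sin_two_mul]; ring
  rw [sin_mul_cos, Real.sin_sq_eq_half_sub, Real.cos_sq]
  ext i j
  fin_cases i <;> fin_cases j <;> simp [PauliX, PauliZ]

theorem rotProj_eq :
    rotProj = (1 / 2 : ℂ) • (1 : Matrix (Fin 2) (Fin 2) ℂ) -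
      ((√2 / 4 : ℝ) : ℂ) • (PauliZ - PauliX) := by
  have double_angle : 2 * (Real.pi / 8) = Real.pi / 4 := by ring
  have quarter : √2 / 2 / 2 = √2 / 4 := by ring
  rw [rotProj, Drot, rotation_conjTranspose_mul_proj_mul_rotation,
    rotated_proj_eq_pauli, double_angle, Real.sin_pi_div_four, Real.cos_pi_div_four, quarter]
  module

theorem re_trace_mul_rotProj {ρ : Matrix (Fin 2) (Fin 2) ℂ} (hρ : ρ.trace = 1) :
    (ρ * rotProj).trace.re = 1 / 2 - √2 / 4 * (ρ * (PauliZ - PauliX)).trace.re := by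
  rw [rotProj_eq, mul_sub, mul_smul_comm, mul_smul_comm, mul_one, trace_sub, trace_smul,
    trace_smul, hρ, Complex.sub_re, smul_eq_mul, smul_eq_mul, Complex.re_ofReal_mul]
  norm_num

theorem sin_sq_pi_div_eight : Real.sin (Real.pi / 8) ^ 2 = 1 / 2 - √2 / 4 := by
  rw [Real.sin_sq_eq_half_sub, show 2 * (Real.pi / 8) = Real.pi / 4 by ring,
    Real.cos_pi_div_four]
  ring

theorem energy_lower_bound_case_II_1_general {ρ : Matrix (Fin 2) (Fin 2) ℂ} (hρ : ρ.trace = 1) :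
    Real.sin (Real.pi / 8) ^ 2 ≤ (ρ * rotProj).trace.re ↔
      (ρ * (PauliZ - PauliX)).trace.re ≤ 1 := by
  have weight_pos : 0 < √2 / 4 := by positivity
  rw [re_trace_mul_rotProj hρ, sin_sq_pi_div_eight, sub_le_sub_iff_left,
    mul_le_iff_le_one_right weight_pos]

theorem abs_sin_div_four_le_half (x : ℝ) : |Real.sin x / 4| ≤ 1 / 2 := by
  rw [abs_div, abs_of_pos (four_pos (α := ℝ))]
  linarith [Real.abs_sin_le_one x]

theorem energy_lower_bound_case_II_1
    (θ : ℝ) (σ : Matrix (Fin 2) (Fin 2) ℂ)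
    (hσ : σ = PauliX ∨ σ = -PauliX ∨ σ = PauliY ∨ σ = -PauliY ∨ σ = PauliZ ∨ σ = -PauliZ) :
    Real.sin (Real.pi / 8) ^ 2 ≤
      (Matrix.trace (((1 / 2 : ℂ) • (1 : Matrix (Fin 2) (Fin 2) ℂ) +
        ((Real.sin (2 * θ) / 4 : ℝ) : ℂ) • σ) * rotProj)).re :=
  (energy_lower_bound_case_II_1_general (trace_half_add_smul (IsSignedPauli.trace_eq_zero hσ) _)).2
    (IsSignedPauli.re_trace_half_add_smul_mul_le hσ (abs_sin_div_four_le_half _))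
end

section
/- Let r and d be natural numbers with d ≥ 1. The number of matrices A : Matrix (Fin r) (Fin d) (ZMod 2) such that the all-ones vector (fun _ => 1 : Fin d → ZMod 2) lies in the span of the rows of A (i.e. in Submodule.span (ZMod 2) {A i | i : Fin r}) is at most (2^r - 1) * 2^(d*(r-1)). Equivalently, for A drawn uniformly at random, the probability that the all-ones vector lies in the row span of A is at most (2^r - 1)/2^d. (Counting form of part 2 of Lemma 4.3 of the paper, proved there by induction on the number of rows.) -/
/-!
A vector `v ≠ 0` lies in the span of a family `w` exactly when `∑ i, c i • w i = v` for some
coefficient vector `c ≠ 0`. For fixed `c` with `c i ≠ 0`, this relation determines `w i` from the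
other entries, which are free; the bound is a union bound over `c`.
-/

theorem card_subtype_ne {α : Type*} [Finite α] (a : α) :
    Nat.card {x // x ≠ a} = Nat.card α - 1 := by
  rw [← Set.ncard_singleton a, ← Set.ncard_compl]
  rfl

section UnionBound

variable {R V ι : Type*} [Semiring R] [AddCommMonoid V] [Module R V] [Fintype ι] {v : V}

theorem exists_ne_zero_sum_smul_eq_of_mem_span_range {w : ι → V} (hv : v ≠ 0)
    (h : v ∈ Submodule.span R (Set.range w)) : ∃ c : ι → R, c ≠ 0 ∧ ∑ i, c i • w i = v := by
  obtain ⟨c, hc⟩ := (Submodule.mem_span_range_iff_exists_fun R).1 h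
  refine ⟨c, ?_, hc⟩
  rintro rfl
  exact hv (by simpa using hc.symm)

theorem card_mem_span_range_le_sum [Finite V] [Fintype {c : ι → R // c ≠ 0}] (hv : v ≠ 0) :
    Nat.card {w : ι → V // v ∈ Submodule.span R (Set.range w)} ≤
      ∑ c : {c : ι → R // c ≠ 0}, Nat.card {w : ι → V // ∑ i, c.1 i • w i = v} := by
  let forgetCoeffs : (Σ c : {c : ι → R // c ≠ 0}, {w : ι → V // ∑ i, c.1 i • w i = v}) →
      {w : ι → V // v ∈ Submodule.span R (Set.range w)} := fun ⟨c, w, hw⟩ ↦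
    ⟨w, (Submodule.mem_span_range_iff_exists_fun R).2 ⟨c, hw⟩⟩
  have forgetCoeffs_surjective : Function.Surjective forgetCoeffs := by
    rintro ⟨w, hw⟩
    obtain ⟨c, hc, hcw⟩ := exists_ne_zero_sum_smul_eq_of_mem_span_range hv hw
    exact ⟨⟨⟨c, hc⟩, w, hcw⟩, rfl⟩
  rw [← Nat.card_sigma]
  exact Nat.card_le_card_of_surjective forgetCoeffs forgetCoeffs_surjective

end UnionBound

section UnitCoefficient

variable {R V ι : Type*} [Ring R] [AddCommGroup V] [Module R V] [Fintype ι]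
  {c : ι → R} {i : ι}

theorem bijective_restrict_sum_smul_eq (hi : IsUnit (c i)) (v : V) :
    Function.Bijective fun (w : {w : ι → V // ∑ j, c j • w j = v}) (j : {j // j ≠ i}) ↦ w.1 j := by
  classical
  obtain ⟨a, ha⟩ := hi
  have sum_eq_iff (w : ι → V) : ∑ j, c j • w j = v ↔
      w i = a⁻¹ • (v - ∑ j : {j // j ≠ i}, c j • w j) := by
    rw [Fintype.sum_eq_add_sum_subtype_ne _ i, ← ha, ← Units.smul_def, ← eq_sub_iff_add_eq,
      eq_inv_smul_iff]
  constructor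
  · rintro ⟨w, hw⟩ ⟨w', hw'⟩ h
    have off_pivot (j : {j // j ≠ i}) : w j = w' j := congrFun h j
    have at_pivot : w i = w' i := by
      rw [(sum_eq_iff w).1 hw, (sum_eq_iff w').1 hw']
      simp only [off_pivot]
    ext j
    obtain rfl | hj := eq_or_ne j i
    exacts [at_pivot, off_pivot ⟨j, hj⟩]
  · intro u
    let w := (Equiv.funSplitAt i V).symm (a⁻¹ • (v - ∑ j : {j // j ≠ i}, c j • u j), u)
    have off_pivot (j : {j // j ≠ i}) : w j = u j := by simp [w, j.2]
    refine ⟨⟨w, (sum_eq_iff w).2 ?_⟩, funext off_pivot⟩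
    simp only [off_pivot]
    simp [w]

theorem card_sum_smul_eq (hi : IsUnit (c i)) (v : V) :
    Nat.card {w : ι → V // ∑ j, c j • w j = v} = Nat.card V ^ (Nat.card ι - 1) := by
  rw [Nat.card_eq_of_bijective _ (bijective_restrict_sum_smul_eq hi v), Nat.card_fun,
    card_subtype_ne]

end UnitCoefficient

theorem count_allOnes_in_rowSpan_le_general {K V ι : Type*} [DivisionRing K] [AddCommGroup V]
    [Module K V] [Finite V] [Finite ι] {v : V} (hv : v ≠ 0) :
    Nat.card {w : ι → V // v ∈ Submodule.span K (Set.range w)} ≤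
      (Nat.card K ^ Nat.card ι - 1) * Nat.card V ^ (Nat.card ι - 1) := by
  have : Finite K := .of_injective _ (smul_left_injective K hv)
  have := Fintype.ofFinite ι
  have := Fintype.ofFinite {c : ι → K // c ≠ 0}
  have card_relation (c : {c : ι → K // c ≠ 0}) :
      Nat.card {w : ι → V // ∑ i, c.1 i • w i = v} = Nat.card V ^ (Nat.card ι - 1) := by
    obtain ⟨i, hi⟩ := Function.ne_iff.1 c.2
    exact card_sum_smul_eq (isUnit_iff_ne_zero.2 hi) v
  calc Nat.card {w : ι → V // v ∈ Submodule.span K (Set.range w)}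
      ≤ ∑ c : {c : ι → K // c ≠ 0}, Nat.card {w : ι → V // ∑ i, c.1 i • w i = v} :=
        card_mem_span_range_le_sum hv
    _ = Nat.card {c : ι → K // c ≠ 0} * Nat.card V ^ (Nat.card ι - 1) := by
        simp only [card_relation, Finset.sum_const, Finset.card_univ, smul_eq_mul,
          Nat.card_eq_fintype_card]
    _ = (Nat.card K ^ Nat.card ι - 1) * Nat.card V ^ (Nat.card ι - 1) := by
        rw [card_subtype_ne, Nat.card_fun]

theorem count_allOnes_in_rowSpan_le (r d : ℕ) (hd : 1 ≤ d) :
    Nat.card {A : Matrix (Fin r) (Fin d) (ZMod 2) //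
        (fun _ => 1 : Fin d → ZMod 2) ∈ Submodule.span (ZMod 2) (Set.range A)} ≤
      (2 ^ r - 1) * 2 ^ (d * (r - 1)) := by
  have allOnes_ne_zero : (fun _ ↦ 1 : Fin d → ZMod 2) ≠ 0 :=
    fun h ↦ one_ne_zero (congrFun h ⟨0, hd⟩)
  exact (count_allOnes_in_rowSpan_le_general (K := ZMod 2) (ι := Fin r) allOnes_ne_zero).trans_eq
    (by simp [pow_mul])
end

section
/- Let h : Matrix (Fin r) (Fin d) (ZMod 2) and suppose at least one row of h has odd weight. Then there exists a matrix h' : Matrix (Fin r) (Fin d) (ZMod 2) such that (i) h' has the same kernel as h, i.e. {x | h'.mulVec x = 0} = {x | h.mulVec x = 0} (indeed h' has the same row span as h), and (ii) every row of h' has odd weight. (This is the row-modification step in the proof of Claim 3.6 of the paper: adding a fixed odd-weight row to each even-weight row produces an equivalent parity-check matrix all of whose rows have odd weight.) -/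
/-!
Fix a row whose entries sum to `1`. Adding multiples of it to the other rows is an invertible row
operation, so it preserves the row span, and the multiple `1 - s` corrects a row of sum `s` to one
of sum `1`. The kernel of a matrix is the annihilator of its row span, hence does not change either.
-/

open Matrix Submodule

section Span

variable {R M ι : Type*} [Ring R] [AddCommGroup M] [Module R M]

theorem span_range_add_smul_eq (v : ι → M) {c : ι → R} {k : ι} (hc : c k = 0) :
    span R (Set.range fun i ↦ v i + c i • v k) = span R (Set.range v) := by
  let w : ι → M := fun i ↦ v i + c i • v k
  have w_pivot : w k = v k := by simp only [w, hc, zero_smul, add_zero]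
  have v_eq (i : ι) : v i = w i - c i • w k := by rw [w_pivot, add_sub_cancel_right]
  have v_mem (i : ι) : v i ∈ span R (Set.range v) := subset_span ⟨i, rfl⟩
  have w_mem (i : ι) : w i ∈ span R (Set.range w) := subset_span ⟨i, rfl⟩
  apply span_eq_span <;> rintro _ ⟨i, rfl⟩
  · exact add_mem (v_mem i) (smul_mem _ _ (v_mem k))
  · change v i ∈ span R (Set.range w)
    rw [v_eq]
    exact sub_mem (w_mem i) (smul_mem _ _ (w_mem k))

theorem exists_span_range_eq_and_forall_apply_eq_one (f : M →ₗ[R] R) (v : ι → M)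
    (hv : ∃ k, f (v k) = 1) :
    ∃ w : ι → M, span R (Set.range w) = span R (Set.range v) ∧ ∀ i, f (w i) = 1 := by
  obtain ⟨k, hk⟩ := hv
  refine ⟨fun i ↦ v i + (1 - f (v i)) • v k, span_range_add_smul_eq v ?_, fun i ↦ ?_⟩
  · rw [hk, sub_self]
  · rw [map_add, map_smul, hk, smul_eq_mul, mul_one, add_sub_cancel]

end Span

section Kernel

variable {R l m n : Type*} [Semiring R] [Fintype n]

theorem mulVec_eq_zero_iff_forall_mem_span_row (A : Matrix m n R) (x : n → R) :
    A *ᵥ x = 0 ↔ ∀ u ∈ span R (Set.range A.row), u ⬝ᵥ x = 0 := by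
  refine ⟨fun hx u hu ↦ ?_, fun hx ↦ funext fun i ↦ hx _ (subset_span ⟨i, rfl⟩)⟩
  induction hu using span_induction with
  | mem u hu =>
    obtain ⟨i, rfl⟩ := hu
    exact congrFun hx i
  | zero => exact zero_dotProduct x
  | add u v _ _ hu hv => rw [add_dotProduct, hu, hv, add_zero]
  | smul c u _ hu => rw [smul_dotProduct, hu, smul_zero]

theorem setOf_mulVec_eq_zero_congr_of_span_row_eq {A : Matrix l n R} {B : Matrix m n R}
    (hAB : span R (Set.range A.row) = span R (Set.range B.row)) :
    {x | A *ᵥ x = 0} = {x | B *ᵥ x = 0} := by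
  simp only [mulVec_eq_zero_iff_forall_mem_span_row, hAB]

end Kernel

theorem exists_equivalent_parity_check_all_rows_odd_general {R m n : Type*} [Ring R] [Fintype n]
    (A : Matrix m n R) (hA : ∃ i, ∑ j, A i j = 1) :
    ∃ B : Matrix m n R,
      span R (Set.range B.row) = span R (Set.range A.row) ∧
      {x | B *ᵥ x = 0} = {x | A *ᵥ x = 0} ∧
      ∀ i, ∑ j, B i j = 1 := by
  let rowSum : (n → R) →ₗ[R] R := ∑ j, LinearMap.proj j
  have rowSum_apply (u : n → R) : rowSum u = ∑ j, u j := LinearMap.sum_apply ..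
  obtain ⟨B, span_eq, B_odd⟩ :=
    exists_span_range_eq_and_forall_apply_eq_one rowSum A.row (by simpa only [rowSum_apply])
  exact ⟨B, span_eq, setOf_mulVec_eq_zero_congr_of_span_row_eq span_eq,
    fun i ↦ (rowSum_apply _).symm.trans (B_odd i)⟩

theorem exists_equivalent_parity_check_all_rows_odd
    (r d : ℕ) (h : Matrix (Fin r) (Fin d) (ZMod 2))
    (hodd : ∃ i, ∑ j, h i j = 1) :
    ∃ h' : Matrix (Fin r) (Fin d) (ZMod 2),
      Submodule.span (ZMod 2) (Set.range h') = Submodule.span (ZMod 2) (Set.range h) ∧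
      {x : Fin d → ZMod 2 | h'.mulVec x = 0} = {x : Fin d → ZMod 2 | h.mulVec x = 0} ∧
      ∀ i, ∑ j, h' i j = 1 :=
  exists_equivalent_parity_check_all_rows_odd_general h hodd
end
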